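/- Let k be algebraically closed. If M_• and M′_• are two final filtrations of (M, F, V) (complete flags with dim M_j = j such that every F(M_j) and every V^{−1}(M_j) is a member of the flag), then dim_k F(M_j) = dim_k F(M′_j) for every j. Moreover, in the principally quasi-polarized case with dim_k M = 2g, the function ψ(j) := dim_k F(M_j), 0 ≤ j ≤ 2g, is a final sequence: ψ(0) = 0, ψ(j) − ψ(j−1) ∈ {0,1} for all j, and ψ(2g − i) = ψ(i) + g − i for 0 ≤ i ≤ g. -/

import Mathlib

open Module

instance frobenius_surjective_inst (p : ℕ) [Fact p.Prime] (k : Type*) [Field k] [CharP k p]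
    [PerfectRing k p] : RingHomSurjective (frobenius k p) :=
  ⟨(frobeniusEquiv k p).surjective⟩

instance frobeniusEquiv_symm_surjective_inst (p : ℕ) [Fact p.Prime] (k : Type*) [Field k]
    [CharP k p] [PerfectRing k p] :
    RingHomSurjective ((frobeniusEquiv k p).symm : k →+* k) :=
  ⟨(frobeniusEquiv k p).symm.surjective⟩

/-- A *final filtration* of `(M, F, V)`: a complete flag
`0 = M_0 ⊂ M_1 ⊂ ⋯ ⊂ M_n = M` with `dim_k M_j = j` (where `n = dim_k M`) such that every
`F(M_j)` and every `V⁻¹(M_j)` is again a member of the flag.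
(Only the terms `Mf 0, …, Mf n` are relevant.) -/
def IsFinalFiltration (p : ℕ) [Fact p.Prime] {k : Type*} [Field k] [CharP k p]
    [PerfectRing k p] {M : Type*} [AddCommGroup M] [Module k M] (n : ℕ)
    (F : M →ₛₗ[frobenius k p] M)
    (V : M →ₛₗ[((frobeniusEquiv k p).symm : k →+* k)] M)
    (Mf : ℕ → Submodule k M) : Prop :=
  Mf 0 = ⊥ ∧ Mf n = ⊤ ∧ (∀ j, j < n → Mf j < Mf (j + 1)) ∧
    (∀ j ≤ n, finrank k (Mf j) = j) ∧
    ∀ j ≤ n, (∃ j' ≤ n, (Mf j).map F = Mf j') ∧ (∃ j'' ≤ n, (Mf j).comap V = Mf j'')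


theorem comb_count (ψ φ : ℕ → ℕ) (T : Finset ℕ) :
    (∀ i ∈ T, ∀ j ∈ T, i ≤ j → ψ i ≤ ψ j ∧ φ i ≤ φ j) →
    (∀ i ∈ T, ∀ j ∈ T, i < j → ψ i + φ i < ψ j + φ j) → T.Nonempty →
    T.card + 1 ≤ (T.image ψ).card + (T.image φ).card ∧
    ∀ a ∈ T, ∀ b ∈ T, a < b → (∀ c ∈ T, c ≤ a ∨ b ≤ c) → ψ a < ψ b → φ a < φ b →
      T.card + 2 ≤ (T.image ψ).card + (T.image φ).card := by
  induction T using Finset.induction_on_max with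
  | empty => intro _ _ h; simp at h
  | insert x T hx ih =>
    intro hm hs _
    have hxT : x ∉ T := fun h => lt_irrefl _ (hx x h)
    rcases T.eq_empty_or_nonempty with rfl | hne
    · simp
    have ih := ih (fun i hi j hj => hm i (by simp [hi]) j (by simp [hj]))
      (fun i hi j hj => hs i (by simp [hi]) j (by simp [hj])) hne
    obtain ⟨ih1, ih2⟩ := ih
    set m := T.max' hne with hmdef
    have hmT : m ∈ T := T.max'_mem hne
    have hmx := hx m hmT
    have hle : ∀ t ∈ T, t ≤ m := fun t ht => T.le_max' t ht
    have hmm := hm m (by simp [hmT]) x (by simp) hmx.le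
    have hss := hs m (by simp [hmT]) x (by simp) hmx
    have key : ∀ f : ℕ → ℕ, (∀ i ∈ T, f i ≤ f m) →
        (T.image f).card + (if f m < f x then 1 else 0) ≤ ((insert x T).image f).card := by
      intro f hf
      rw [Finset.image_insert]
      split_ifs with h
      · rw [Finset.card_insert_of_notMem]
        intro h'
        obtain ⟨t, ht, e⟩ := Finset.mem_image.1 h'
        have := hf t ht
        omega
      · exact Finset.card_le_card (Finset.subset_insert _ _)
    have k1 := key ψ (fun i hi => (hm i (by simp [hi]) m (by simp [hmT]) (hle i hi)).1)
    have k2 := key φ (fun i hi => (hm i (by simp [hi]) m (by simp [hmT]) (hle i hi)).2)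
    rw [Finset.card_insert_of_notMem hxT]
    have hor : ψ m < ψ x ∨ φ m < φ x := by omega
    refine ⟨by split_ifs at k1 k2 <;> omega, ?_⟩
    intro a ha b hb hab hc h1 h2
    rcases Finset.mem_insert.1 hb with rfl | hbT
    · have haT : a ∈ T := by
        rcases Finset.mem_insert.1 ha with rfl | h
        · omega
        · exact h
      have : a = m := by
        have := hle a haT
        have := hc m (by simp [hmT])
        omega
      rw [← this, if_pos h1] at k1
      rw [← this, if_pos h2] at k2
      omega
    · have haT : a ∈ T := by
        rcases Finset.mem_insert.1 ha with rfl | h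
        · have := hx b hbT; omega
        · exact h
      have := ih2 a haT b hbT hab (fun c hcT => hc c (by simp [hcT])) h1 h2
      split_ifs at k1 k2 <;> omega

inductive CombGen (n : ℕ) (ψ φ : ℕ → ℕ) : ℕ → Prop
  | zero : CombGen n ψ φ 0
  | top : CombGen n ψ φ n
  | f (j) : CombGen n ψ φ j → CombGen n ψ φ (ψ j)
  | v (j) : CombGen n ψ φ j → CombGen n ψ φ (φ j)

theorem comb_main (n d : ℕ) (ψ ψ' : ℕ → ℕ) (S : Set ℕ) (h0 : 0 ∈ S) (hnS : n ∈ S)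
    (hS : ∀ j ∈ S, j ≤ n)
    (hψ : ∀ i j, i ≤ j → j ≤ n → ψ i ≤ ψ j ∧ ψ j + i ≤ ψ i + j)
    (hψ' : ∀ i j, i ≤ j → j ≤ n → ψ' i ≤ ψ' j ∧ ψ' j + i ≤ ψ' i + j)
    (z : ψ 0 = 0) (hd : ψ n = d) (hSe : ∀ j ∈ S, ψ j = ψ' j)
    (hSf : ∀ j ∈ S, ψ j ∈ S) (hSv : ∀ j ∈ S, d + j - ψ j ∈ S) :
    ∀ j ≤ n, ψ j = ψ' j := by
  classical
  set φ : ℕ → ℕ := fun j => d + j - ψ j with hφ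
  have hsum : ∀ j ≤ n, ψ j + φ j = d + j := by
    intro j hj
    have := hψ 0 j (by omega) hj
    simp only [hφ]; omega
  have hG : ∀ j, CombGen n ψ φ j → j ∈ S := by
    intro j h
    induction h with
    | zero => exact h0
    | top => exact hnS
    | f j _ ih => exact hSf j ih
    | v j _ ih => exact hSv j ih
  set T : Finset ℕ := (Finset.range (n + 1)).filter (CombGen n ψ φ) with hT
  have memT : ∀ j, j ∈ T ↔ CombGen n ψ φ j := by
    intro j
    simp only [hT, Finset.mem_filter, Finset.mem_range]
    exact ⟨fun h => h.2, fun h => ⟨by have := hS j (hG j h); omega, h⟩⟩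
  have Tle : ∀ j ∈ T, j ≤ n := fun j hj => hS j (hG j ((memT j).1 hj))
  have T0 : 0 ∈ T := (memT 0).2 .zero
  have Tn : n ∈ T := (memT n).2 .top
  have cnt := comb_count ψ φ T
    (by
      intro i hi j hj hij
      have := hψ i j hij (Tle j hj)
      have := hsum i (Tle i hi)
      have := hsum j (Tle j hj)
      omega)
    (by
      intro i hi j hj hij
      have := hsum i (Tle i hi)
      have := hsum j (Tle j hj)
      omega) ⟨0, T0⟩
  have hcard : (T.image ψ).card + (T.image φ).card ≤ T.card + 1 := by
    rw [← Finset.card_union_add_card_inter]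
    have h1 : T.image ψ ∪ T.image φ ⊆ T := by
      intro t ht
      rcases Finset.mem_union.1 ht with ht | ht <;>
      obtain ⟨s, hs, rfl⟩ := Finset.mem_image.1 ht
      · exact (memT _).2 (.f s ((memT s).1 hs))
      · exact (memT _).2 (.v s ((memT s).1 hs))
    have h2 : T.image ψ ∩ T.image φ ⊆ {d} := by
      intro t ht
      obtain ⟨ht1, ht2⟩ := Finset.mem_inter.1 ht
      obtain ⟨s, hs, rfl⟩ := Finset.mem_image.1 ht1
      obtain ⟨r, hr, e⟩ := Finset.mem_image.1 ht2
      have := hψ s n (Tle s hs) le_rfl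
      have := hψ 0 r (by omega) (Tle r hr)
      have := hsum r (Tle r hr)
      simp; omega
    have := Finset.card_le_card h1
    have := Finset.card_le_card h2
    simp at this
    omega
  intro j hj
  by_cases hjT : j ∈ T
  · exact hSe j (hG j ((memT j).1 hjT))
  -- neighbours
  have hA : (T.filter (· ≤ j)).Nonempty := ⟨0, by simp [T0]⟩
  have hB : (T.filter (j ≤ ·)).Nonempty := ⟨n, by simp [Tn, hj]⟩
  have ha := Finset.max'_mem _ hA
  have hb := Finset.min'_mem _ hB
  have ha' := fun t ht => Finset.le_max' (T.filter (· ≤ j)) t ht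
  have hb' := fun t ht => Finset.min'_le (T.filter (j ≤ ·)) t ht
  set a := Finset.max' _ hA
  set b := Finset.min' _ hB
  simp only [Finset.mem_filter] at ha hb ha' hb'
  have hajne : a ≠ j := fun h => hjT (h ▸ ha.1)
  have hab : a < b := by omega
  have bad := cnt.2 a ha.1 b hb.1 hab (by
    intro c hc
    rcases le_total c j with h | h
    · exact .inl (ha' c ⟨hc, h⟩)
    · exact .inr (hb' c ⟨hc, h⟩))
  have hbn := Tle b hb.1
  have e1 := hSe a (hG a ((memT a).1 ha.1))
  have e2 := hSe b (hG b ((memT b).1 hb.1))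
  have s1 := hsum a (by omega)
  have s2 := hsum b hbn
  have p1 := hψ a j ha.2 hj
  have p2 := hψ j b hb.2 hbn
  have p3 := hψ' a j ha.2 hj
  have p4 := hψ' j b hb.2 hbn
  by_cases c1 : ψ a < ψ b
  · by_cases c2 : φ a < φ b
    · have := bad c1 c2; omega
    · omega
  · omega

theorem semi_rank_nullity {k : Type*} [Field k] {M : Type*} [AddCommGroup M] [Module k M]
    [FiniteDimensional k M] {σ : k →+* k} [RingHomSurjective σ] (F : M →ₛₗ[σ] M)
    (N : Submodule k M) :
    finrank k (N.map F) + finrank k (N ⊓ LinearMap.ker F : Submodule k M) = finrank k N := by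
  let K : Submodule k N := (LinearMap.ker F).comap N.subtype
  have hK : finrank k K = finrank k (N ⊓ LinearMap.ker F : Submodule k M) := by
    rw [← Submodule.map_comap_subtype]
    exact (LinearEquiv.finrank_eq
      (Submodule.equivMapOfInjective N.subtype N.injective_subtype K))
  let G : N →ₛₗ[σ] (N.map F) :=
    { toFun := fun x => ⟨F x, Submodule.mem_map_of_mem x.2⟩
      map_add' := fun x y => by ext; simp
      map_smul' := fun a x => by ext; simp }
  have hG0 : ∀ x : N, G x = 0 ↔ x ∈ K := by
    intro x
    rw [← Subtype.coe_inj]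
    rfl
  let H : (N ⧸ K) →ₛₗ[σ] (N.map F) := K.liftQ G (fun x hx => (hG0 x).2 hx)
  have hinj : Function.Injective H := by
    rw [injective_iff_map_eq_zero]
    intro x
    obtain ⟨x, rfl⟩ := Submodule.Quotient.mk_surjective K x
    intro h
    rw [Submodule.Quotient.mk_eq_zero]
    exact (hG0 x).1 h
  have hsurj : Function.Surjective H := by
    rintro ⟨y, x, hx, rfl⟩
    exact ⟨Submodule.Quotient.mk ⟨x, hx⟩, rfl⟩
  let e : (N ⧸ K) ≃+ (N.map F) := AddEquiv.ofBijective H.toAddMonoidHom ⟨hinj, hsurj⟩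
  have hr : Module.rank k (N ⧸ K) = Module.rank k (N.map F) :=
    rank_eq_of_equiv_equiv σ e ⟨σ.injective, RingHomSurjective.is_surjective⟩
      (fun r m => H.map_smulₛₗ r m)
  have hr' : finrank k (N ⧸ K) = finrank k (N.map F) := by
    unfold finrank; rw [hr]
  rw [← hK, ← hr']
  exact Submodule.finrank_quotient_add_finrank K

section
variable (p : ℕ) [Fact p.Prime] {k : Type*} [Field k]
    [CharP k p] [PerfectRing k p] {M : Type*} [AddCommGroup M] [Module k M]
    [FiniteDimensional k M]
    (F : M →ₛₗ[frobenius k p] M)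
    (V : M →ₛₗ[((frobeniusEquiv k p).symm : k →+* k)] M)

theorem map_F_incr (N N' : Submodule k M) (h : N ≤ N') :
    finrank k (N.map F) ≤ finrank k (N'.map F) ∧
    finrank k (N'.map F) + finrank k N ≤ finrank k (N.map F) + finrank k N' := by
  have h1 := semi_rank_nullity F N
  have h2 := semi_rank_nullity F N'
  have h3 : finrank k (N.map F) ≤ finrank k (N'.map F) :=
    Submodule.finrank_mono (Submodule.map_mono h)
  have h4 : finrank k (N ⊓ LinearMap.ker F : Submodule k M) ≤
      finrank k (N' ⊓ LinearMap.ker F : Submodule k M) :=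
    Submodule.finrank_mono (inf_le_inf_right _ h)
  omega

theorem comap_V_rank (hFV : LinearMap.ker F = LinearMap.range V)
    (hVF : LinearMap.ker V = LinearMap.range F) (N : Submodule k M) :
    finrank k (N.comap V) + finrank k (N.map F) =
      finrank k ((⊤ : Submodule k M).map F) + finrank k N := by
  have h1 := semi_rank_nullity F N
  have h2 := semi_rank_nullity V (N.comap V)
  have h3 : (N.comap V).map V = N ⊓ LinearMap.ker F := by
    rw [Submodule.map_comap_eq, hFV, inf_comm]
  have h4 : N.comap V ⊓ LinearMap.ker V = (⊤ : Submodule k M).map F := by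
    rw [← LinearMap.range_eq_map, ← hVF, inf_eq_right]
    intro x hx
    rw [Submodule.mem_comap, LinearMap.mem_ker.1 hx]
    exact N.zero_mem
  rw [h3, h4] at h2
  omega

theorem flag_mono {n : ℕ} {Mf : ℕ → Submodule k M} (hMf : IsFinalFiltration p n F V Mf) :
    ∀ i j, i ≤ j → j ≤ n → Mf i ≤ Mf j := by
  intro i j hij
  induction j, hij using Nat.le_induction with
  | base => intro _; exact le_rfl
  | succ j _ ih => intro hj; exact (ih (by omega)).trans (hMf.2.2.1 j (by omega)).le

theorem psi_incr {n : ℕ} {Mf : ℕ → Submodule k M} (hMf : IsFinalFiltration p n F V Mf)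
    (i j : ℕ) (hij : i ≤ j) (hj : j ≤ n) :
    finrank k ((Mf i).map F) ≤ finrank k ((Mf j).map F) ∧
    finrank k ((Mf j).map F) + i ≤ finrank k ((Mf i).map F) + j := by
  have := map_F_incr p F _ _ (flag_mono p F V hMf i j hij hj)
  rwa [hMf.2.2.2.1 i (by omega), hMf.2.2.2.1 j hj] at this

theorem part_one (n : ℕ) (hFV : LinearMap.ker F = LinearMap.range V)
    (hVF : LinearMap.ker V = LinearMap.range F)
    (Mf Mf' : ℕ → Submodule k M)
    (hMf : IsFinalFiltration p n F V Mf) (hMf' : IsFinalFiltration p n F V Mf') :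
    ∀ j ≤ n, finrank k ((Mf j).map F) = finrank k ((Mf' j).map F) := by
  refine comb_main n (finrank k ((⊤ : Submodule k M).map F)) (fun j => finrank k ((Mf j).map F))
    (fun j => finrank k ((Mf' j).map F)) {j | j ≤ n ∧ Mf j = Mf' j}
    ⟨Nat.zero_le _, by rw [hMf.1, hMf'.1]⟩ ⟨le_rfl, by rw [hMf.2.1, hMf'.2.1]⟩
    (fun j hj => hj.1) (psi_incr p F V hMf) (psi_incr p F V hMf')
    (by simp [hMf.1]) (by rw [hMf.2.1]) (fun j hj => by rw [hj.2]) ?_ ?_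
  · rintro j ⟨hj, e⟩
    obtain ⟨a, ha, h1⟩ := (hMf.2.2.2.2 j hj).1
    obtain ⟨b, hb, h2⟩ := (hMf'.2.2.2.2 j hj).1
    have ea := hMf.2.2.2.1 a ha
    have eb := hMf'.2.2.2.1 b hb
    rw [← h1] at ea
    rw [← h2, ← e] at eb
    have hab : a = b := ea.symm.trans eb
    subst hab
    simp only [ea]
    exact ⟨ha, by rw [← h1, ← h2, e]⟩
  · rintro j ⟨hj, e⟩
    obtain ⟨a, ha, h1⟩ := (hMf.2.2.2.2 j hj).2
    obtain ⟨b, hb, h2⟩ := (hMf'.2.2.2.2 j hj).2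
    have ea := hMf.2.2.2.1 a ha
    have eb := hMf'.2.2.2.1 b hb
    rw [← h1] at ea
    rw [← h2, ← e] at eb
    have hab : a = b := ea.symm.trans eb
    subst hab
    have hr := comap_V_rank p F V hFV hVF (Mf j)
    rw [hMf.2.2.2.1 j hj] at hr
    have : finrank k ((⊤ : Submodule k M).map F) + j - finrank k ((Mf j).map F) = a := by omega
    simp only [this]
    exact ⟨ha, by rw [← h1, ← h2, e]⟩

theorem comap_V_orth (B : LinearMap.BilinForm k M)
    (hB : ∀ x y, B (F x) y = (B x (V y)) ^ p) (N : Submodule k M) :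
    (B.orthogonal N).comap V = B.orthogonal (N.map F) := by
  have hp : p ≠ 0 := (Fact.out : p.Prime).ne_zero
  ext y
  simp only [Submodule.mem_comap, LinearMap.BilinForm.mem_orthogonal_iff]
  constructor
  · rintro h _ ⟨x, hx, rfl⟩
    rw [hB, h x hx, zero_pow hp]
  · intro h x hx
    have := h (F x) (Submodule.mem_map_of_mem hx)
    rw [hB] at this
    exact pow_eq_zero_iff hp |>.1 this

theorem dual_flag (n : ℕ) (hn : finrank k M = n)
    (Mf : ℕ → Submodule k M) (hMf : IsFinalFiltration p n F V Mf)
    (B : LinearMap.BilinForm k M) (hnd : B.Nondegenerate) (hrefl : B.IsRefl)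
    (hB : ∀ x y, B (F x) y = (B x (V y)) ^ p) :
    (∀ N : Submodule k M, (B.orthogonal N).map F = B.orthogonal (N.comap V)) ∧
    IsFinalFiltration p n F V (fun j => B.orthogonal (Mf (n - j))) := by
  have oo := fun N => LinearMap.BilinForm.orthogonal_orthogonal hnd hrefl N
  have h1 : ∀ N : Submodule k M, (B.orthogonal N).map F = B.orthogonal (N.comap V) := by
    intro N
    have := comap_V_orth p F V B hB (B.orthogonal N)
    rw [oo] at this
    rw [this, oo]
  have fo := fun N => LinearMap.BilinForm.finrank_orthogonal hnd N
  have fr : ∀ j ≤ n, finrank k (B.orthogonal (Mf (n - j))) = j := by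
    intro j hj
    rw [fo, hMf.2.2.2.1 (n - j) (by omega), hn]; omega
  refine ⟨h1, ?_, ?_, ?_, fr, ?_⟩
  · exact Submodule.finrank_eq_zero.1 (fr 0 (by omega))
  · exact Submodule.eq_top_of_finrank_eq ((fr n le_rfl).trans hn.symm)
  · intro j hj
    refine lt_of_le_of_ne
      (LinearMap.BilinForm.orthogonal_le (flag_mono p F V hMf _ _ (by omega) (by omega))) ?_
    intro h
    have e1 := fr j (by omega)
    have e2 := fr (j + 1) (by omega)
    simp only at h
    rw [h] at e1
    omega
  · intro j hj
    obtain ⟨⟨a, ha, e1⟩, ⟨b, hb, e2⟩⟩ := hMf.2.2.2.2 (n - j) (by omega)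
    refine ⟨⟨n - b, by omega, ?_⟩, ⟨n - a, by omega, ?_⟩⟩
    · simp only
      rw [h1, e2, Nat.sub_sub_self hb]
    · simp only
      rw [comap_V_orth p F V B hB, e1, Nat.sub_sub_self ha]
end

/-- Let `k` be algebraically closed.  If `M_•` and `M'_•` are two final filtrations of
`(M, F, V)`, then `dim_k F(M_j) = dim_k F(M'_j)` for every `j`.  Moreover, in the
principally quasi-polarized case with `dim_k M = 2g`, the function
`ψ(j) := dim_k F(M_j)`, `0 ≤ j ≤ 2g`, is a final sequence: `ψ 0 = 0`,
`ψ j - ψ (j-1) ∈ {0, 1}` for all `j`, and `ψ (2g - i) = ψ i + (g - i)` for `0 ≤ i ≤ g`. -/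
theorem final_filtration_dim_welldefined (p : ℕ) [Fact p.Prime] (k : Type*) [Field k]
    [CharP k p] [PerfectRing k p] [IsAlgClosed k] (M : Type*) [AddCommGroup M] [Module k M]
    [FiniteDimensional k M] (n : ℕ) (hn : finrank k M = n)
    (F : M →ₛₗ[frobenius k p] M)
    (V : M →ₛₗ[((frobeniusEquiv k p).symm : k →+* k)] M)
    (hFV : LinearMap.ker F = LinearMap.range V)
    (hVF : LinearMap.ker V = LinearMap.range F)
    (Mf Mf' : ℕ → Submodule k M)
    (hMf : IsFinalFiltration p n F V Mf) (hMf' : IsFinalFiltration p n F V Mf') :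
    (∀ j ≤ n, finrank k ((Mf j).map F) = finrank k ((Mf' j).map F)) ∧
    ∀ g : ℕ, n = 2 * g →
      ∀ B : M →ₗ[k] M →ₗ[k] k, (∀ x, B x x = 0) → (∀ x, (∀ y, B x y = 0) → x = 0) →
        (∀ x y, B (F x) y = (B x (V y)) ^ p) →
        letI ψ : ℕ → ℕ := fun j => finrank k ((Mf j).map F)
        ψ 0 = 0 ∧
        (∀ j, 1 ≤ j → j ≤ 2 * g → ψ (j - 1) ≤ ψ j ∧ ψ j ≤ ψ (j - 1) + 1) ∧
        ∀ i ≤ g, ψ (2 * g - i) = ψ i + (g - i) := by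
  refine ⟨part_one p F V n hFV hVF Mf Mf' hMf hMf', ?_⟩
  intro g hg B halt hnd hB
  have hrefl : LinearMap.BilinForm.IsRefl B := (show LinearMap.BilinForm.IsAlt B from halt).isRefl
  have hnd' : LinearMap.BilinForm.Nondegenerate B :=
    ⟨hnd, fun y hy => hnd y (fun x => hrefl x y (hy x))⟩
  obtain ⟨h1, h2⟩ := dual_flag p F V n hn Mf hMf B hnd' hrefl hB
  have fo := fun N => LinearMap.BilinForm.finrank_orthogonal hnd' N
  have p1 := part_one p F V n hFV hVF Mf _ hMf h2
  refine ⟨by simp [hMf.1], ?_, ?_⟩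
  · intro j hj hj'
    have := psi_incr p F V hMf (j - 1) j (by omega) (by omega)
    simp only
    omega
  · intro i hi
    have e := p1 i (by omega)
    rw [h1, fo, hn] at e
    have r := comap_V_rank p F V hFV hVF (Mf (n - i))
    rw [hMf.2.2.2.1 (n - i) (by omega)] at r
    have hd : finrank k ((⊤ : Submodule k M).map F) = g := by
      have c := comap_V_orth p F V B hB ⊤
      have b : LinearMap.BilinForm.orthogonal B ⊤ = ⊥ := by
        apply Submodule.finrank_eq_zero.1
        rw [fo, finrank_top, Nat.sub_self]
      have c2 := congrArg (fun N : Submodule k M => finrank k N) c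
      rw [fo, b] at c2
      have d := comap_V_rank p F V hFV hVF ⊥
      have mb : (⊥ : Submodule k M).map F = ⊥ := Submodule.map_bot F
      rw [mb, finrank_bot] at d
      have := Submodule.finrank_le ((⊤ : Submodule k M).map F)
      omega
    have := Submodule.finrank_le ((Mf (n - i)).comap V)
    rw [← hg]
    beta_reduce
    omega
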